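/- arXiv:1012.5487 — 9 statements merged into one kernel-verified Lean document; each statement's English description precedes it below -/
import Mathlib

section
/- Let f₀, f₁ : ℝ → ℝ be continuous, strictly positive, Lebesgue-integrable functions. Then the likelihood ratio x ↦ f₁(x)/f₀(x) is strictly increasing on ℝ if and only if for every c ∈ ℝ the function x ↦ γ(c,x) = (∫_c^x f₁(t) dt)/(∫_c^x f₀(t) dt) is strictly increasing on the interval (c, ∞). -/
open MeasureTheory

/-!
Write `γ(u, v)` for the ratio of the integrals of `f₁` and `f₀` over `[u, v]`. For `u < x < v`,
`γ(u, v)` is the mediant of `γ(u, x)` and `γ(x, v)`, so monotonicity of `γ(c, ·)` says exactly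
that `γ(c, x) < γ(x, y)` for `c < x < y` (`lt_mediant_iff`).

If `r = f₁ / f₀` is strictly increasing, then `γ(c, x) < r x < γ(x, y)`, since `f₁ < r x * f₀` on
`(c, x)` and `f₁ > r x * f₀` on `(x, y)`. Conversely, for `a < m < b` one has
`r a ≤ γ(a, m) < γ(m, b) ≤ r b`: the outer inequalities hold because `γ(a, x) ≤ γ(a, m)` and
`γ(m, b) ≤ γ(x, b)` for intermediate `x`, while `γ(a, x) → r a` as `x ↓ a` and `γ(x, b) → r b` as
`x ↑ b`.
-/

theorem intervalIntegral_lt_of_lt_on_Ioo {f g : ℝ → ℝ} (hf : Continuous f) (hg : Continuous g)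
    {a b : ℝ} (hab : a < b) (h : ∀ t ∈ Set.Ioo a b, f t < g t) :
    ∫ t in a..b, f t < ∫ t in a..b, g t := by
  have hfi := hf.intervalIntegrable (μ := volume) a b
  have hgi := hg.intervalIntegrable (μ := volume) a b
  have := intervalIntegral.intervalIntegral_pos_of_pos_on (hgi.sub hfi)
    (fun t ht => sub_pos.2 (h t ht)) hab
  rw [intervalIntegral.integral_sub hgi hfi] at this
  linarith

theorem lt_integral_ratio {f₀ f₁ : ℝ → ℝ} (hc₀ : Continuous f₀) (hc₁ : Continuous f₁)
    (hp₀ : ∀ x, 0 < f₀ x) {a b K : ℝ} (hab : a < b)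
    (h : ∀ t ∈ Set.Ioo a b, K < f₁ t / f₀ t) :
    K < (∫ t in a..b, f₁ t) / (∫ t in a..b, f₀ t) := by
  have hpos : 0 < ∫ t in a..b, f₀ t :=
    intervalIntegral.intervalIntegral_pos_of_pos (hc₀.intervalIntegrable a b) hp₀ hab
  rw [lt_div_iff₀ hpos, ← intervalIntegral.integral_const_mul]
  exact intervalIntegral_lt_of_lt_on_Ioo (by fun_prop) hc₁ hab
    fun t ht => (lt_div_iff₀ (hp₀ t)).1 (h t ht)

theorem integral_ratio_lt {f₀ f₁ : ℝ → ℝ} (hc₀ : Continuous f₀) (hc₁ : Continuous f₁)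
    (hp₀ : ∀ x, 0 < f₀ x) {a b K : ℝ} (hab : a < b)
    (h : ∀ t ∈ Set.Ioo a b, f₁ t / f₀ t < K) :
    (∫ t in a..b, f₁ t) / (∫ t in a..b, f₀ t) < K := by
  have hpos : 0 < ∫ t in a..b, f₀ t :=
    intervalIntegral.intervalIntegral_pos_of_pos (hc₀.intervalIntegrable a b) hp₀ hab
  rw [div_lt_iff₀ hpos, ← intervalIntegral.integral_const_mul]
  exact intervalIntegral_lt_of_lt_on_Ioo hc₁ (by fun_prop) hab
    fun t ht => (div_lt_iff₀ (hp₀ t)).1 (h t ht)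

theorem lt_mediant_iff {p q s t : ℝ} (hq : 0 < q) (ht : 0 < t) :
    p / q < (p + s) / (q + t) ↔ p / q < s / t := by
  rw [div_lt_div_iff₀ hq (by positivity), div_lt_div_iff₀ hq ht]
  constructor <;> intro h <;> linarith

theorem mediant_lt_iff {p q s t : ℝ} (hq : 0 < q) (ht : 0 < t) :
    (p + s) / (q + t) < s / t ↔ p / q < s / t := by
  rw [div_lt_div_iff₀ (by positivity) ht, div_lt_div_iff₀ hq ht]
  constructor <;> intro h <;> linarith

theorem smlrp_iff_interval_ratio_strict_mono
    (f₀ f₁ : ℝ → ℝ)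
    (hc₀ : Continuous f₀) (hc₁ : Continuous f₁)
    (hp₀ : ∀ x, 0 < f₀ x) (hp₁ : ∀ x, 0 < f₁ x)
    (hi₀ : Integrable f₀) (hi₁ : Integrable f₁) :
    StrictMono (fun x => f₁ x / f₀ x) ↔
      ∀ c : ℝ,
        StrictMonoOn (fun x => (∫ t in c..x, f₁ t) / (∫ t in c..x, f₀ t)) (Set.Ioi c) := by
  have hpos : ∀ {u v : ℝ}, u < v → 0 < ∫ t in u..v, f₀ t := fun huv =>
    intervalIntegral.intervalIntegral_pos_of_pos (hc₀.intervalIntegrable _ _) hp₀ huv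
  have split₀ : ∀ u x v : ℝ, ∫ t in u..v, f₀ t = (∫ t in u..x, f₀ t) + ∫ t in x..v, f₀ t :=
    fun u x v => (intervalIntegral.integral_add_adjacent_intervals
      (hc₀.intervalIntegrable _ _) (hc₀.intervalIntegrable _ _)).symm
  have split₁ : ∀ u x v : ℝ, ∫ t in u..v, f₁ t = (∫ t in u..x, f₁ t) + ∫ t in x..v, f₁ t :=
    fun u x v => (intervalIntegral.integral_add_adjacent_intervals
      (hc₁.intervalIntegrable _ _) (hc₁.intervalIntegrable _ _)).symm
  constructor
  · intro hr c x hx y _ hxy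
    simp only [Set.mem_Ioi] at hx
    show (∫ t in c..x, f₁ t) / (∫ t in c..x, f₀ t) < (∫ t in c..y, f₁ t) / (∫ t in c..y, f₀ t)
    rw [split₀ c x y, split₁ c x y, lt_mediant_iff (hpos hx) (hpos hxy)]
    exact (integral_ratio_lt hc₀ hc₁ hp₀ hx fun t ht => hr ht.2).trans
      (lt_integral_ratio hc₀ hc₁ hp₀ hxy fun t ht => hr ht.1)
  · intro H a b hab
    have key : ∀ {c x y : ℝ}, c < x → x < y →
        (∫ t in c..x, f₁ t) / (∫ t in c..x, f₀ t) <
          (∫ t in x..y, f₁ t) / (∫ t in x..y, f₀ t) := by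
      intro c x y hcx hxy
      have h := H c (Set.mem_Ioi.2 hcx) (Set.mem_Ioi.2 (hcx.trans hxy)) hxy
      dsimp only at h
      rwa [split₀ c x y, split₁ c x y, lt_mediant_iff (hpos hcx) (hpos hxy)] at h
    have hcont : Continuous fun x => f₁ x / f₀ x := hc₁.div hc₀ fun x => (hp₀ x).ne'
    obtain ⟨m, ham, hmb⟩ := exists_between hab
    have left : f₁ a / f₀ a ≤ (∫ t in a..m, f₁ t) / (∫ t in a..m, f₀ t) := by
      by_contra! hlt
      -- Otherwise `r > γ(a, m)` on some `(a, u)`, so `γ(a, u) > γ(a, m)` although `u ≤ m`.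
      obtain ⟨u, hu, hsub⟩ := (mem_nhdsGT_iff_exists_mem_Ioc_Ioo_subset ham).1
        (mem_nhdsWithin_of_mem_nhds (hcont.continuousAt.eventually_const_lt hlt))
      have h1 := lt_integral_ratio hc₀ hc₁ hp₀ hu.1 fun t ht => hsub ht
      exact h1.not_ge ((H a).monotoneOn (Set.mem_Ioi.2 hu.1) (Set.mem_Ioi.2 ham) hu.2)
    have right : (∫ t in m..b, f₁ t) / (∫ t in m..b, f₀ t) ≤ f₁ b / f₀ b := by
      by_contra! hlt
      -- Otherwise `r < γ(m, b)` on some `(u, b)`, so `γ(u, b) < γ(m, b)` although `m ≤ u`.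
      obtain ⟨u, hu, hsub⟩ := (mem_nhdsLT_iff_exists_mem_Ico_Ioo_subset hmb).1
        (mem_nhdsWithin_of_mem_nhds (hcont.continuousAt.eventually_lt_const hlt))
      have h1 := integral_ratio_lt hc₀ hc₁ hp₀ hu.2 fun t ht => hsub ht
      rcases hu.1.eq_or_lt with rfl | hmu
      · exact lt_irrefl _ h1
      · have h2 := key hmu hu.2
        rw [← mediant_lt_iff (hpos hmu) (hpos hu.2), ← split₀, ← split₁] at h2
        exact lt_asymm h1 h2
    exact (left.trans_lt (key ham hmb)).trans_le right
end

section
/- Let f₀, f₁ : ℝ → ℝ be continuous, strictly positive, Lebesgue-integrable functions such that x ↦ f₁(x)/f₀(x) is strictly increasing on ℝ. Then for all x₀ < x₁ the interval ratio is sandwiched strictly between the endpoint likelihood ratios: f₁(x₀)/f₀(x₀) < (∫_{x₀}^{x₁} f₁(t) dt)/(∫_{x₀}^{x₁} f₀(t) dt) < f₁(x₁)/f₀(x₁). -/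
/-! Write `r = f₁ / f₀`. Monotonicity of `r` gives `r x₀ * f₀ t ≤ f₁ t ≤ r x₁ * f₀ t` on
`[x₀, x₁]`, with strict inequality at the opposite endpoint. By continuity, integrating keeps the
inequalities strict, and dividing by the positive integral of `f₀` yields the sandwich. -/

open MeasureTheory

theorem interval_ratio_sandwich
    (f₀ f₁ : ℝ → ℝ)
    (hc₀ : Continuous f₀) (hc₁ : Continuous f₁)
    (hp₀ : ∀ x, 0 < f₀ x) (hp₁ : ∀ x, 0 < f₁ x)
    (hi₀ : Integrable f₀) (hi₁ : Integrable f₁)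
    (hSMLRP : StrictMono (fun x => f₁ x / f₀ x)) :
    ∀ x₀ x₁ : ℝ, x₀ < x₁ →
      f₁ x₀ / f₀ x₀ < (∫ t in x₀..x₁, f₁ t) / (∫ t in x₀..x₁, f₀ t) ∧
      (∫ t in x₀..x₁, f₁ t) / (∫ t in x₀..x₁, f₀ t) < f₁ x₁ / f₀ x₁ := by
  intro x₀ x₁ h
  have hI : 0 < ∫ t in x₀..x₁, f₀ t :=
    intervalIntegral.intervalIntegral_pos_of_pos (hc₀.intervalIntegrable _ _) hp₀ h
  constructor
  · rw [lt_div_iff₀ hI, ← intervalIntegral.integral_const_mul]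
    refine intervalIntegral.integral_lt_integral_of_continuousOn_of_le_of_exists_lt h
      (by fun_prop) (by fun_prop) (fun t ht => ?_) ⟨x₁, Set.right_mem_Icc.2 h.le, ?_⟩
    · exact (le_div_iff₀ (hp₀ t)).1 (hSMLRP.monotone ht.1.le)
    · exact (lt_div_iff₀ (hp₀ x₁)).1 (hSMLRP h)
  · rw [div_lt_iff₀ hI, ← intervalIntegral.integral_const_mul]
    refine intervalIntegral.integral_lt_integral_of_continuousOn_of_le_of_exists_lt h
      (by fun_prop) (by fun_prop) (fun t ht => ?_) ⟨x₀, Set.left_mem_Icc.2 h.le, ?_⟩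
    · exact (div_le_iff₀ (hp₀ t)).1 (hSMLRP.monotone ht.2)
    · exact (div_lt_iff₀ (hp₀ x₀)).1 (hSMLRP h)
end

section
/- Let f₀, f₁ : ℝ → ℝ be continuous, strictly positive, Lebesgue-integrable functions. If for every c ∈ ℝ the function x ↦ γ(c,x) = (∫_c^x f₁(t) dt)/(∫_c^x f₀(t) dt) is strictly increasing on (c, ∞), then the likelihood ratio x ↦ f₁(x)/f₀(x) is strictly increasing on ℝ. -/
open MeasureTheory

/-!
Write `γ c x` for the ratio of the integrals of `f₁` and `f₀` over `[c, x]`, and let `a < m < b < x`.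
Since `γ a x` is a mediant of `γ a b` and `γ b x`, the inequality `γ a b < γ a x` forces
`γ a b < γ b x`. As `γ c x` tends to `f₁ c / f₀ c` when `x` decreases to `c`
(`tendsto_interval_ratio`), letting `x ↓ b` yields `γ a b ≤ f₁ b / f₀ b`. Monotonicity in the right
endpoint gives `f₁ a / f₀ a ≤ γ a m < γ a b`, and the two combine to the strict inequality.
-/

open Filter Topology Set

/-- The interval ratio with left endpoint `c` extends continuously to `c` from the right, with the
likelihood ratio at `c` as its limit: it is a quotient of difference quotients of primitives. -/
lemma tendsto_interval_ratio {f₀ f₁ : ℝ → ℝ} (hc₀ : Continuous f₀) (hc₁ : Continuous f₁)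
    (hp₀ : ∀ x, 0 < f₀ x) (c : ℝ) :
    Tendsto (fun x => (∫ t in c..x, f₁ t) / (∫ t in c..x, f₀ t)) (𝓝[>] c) (𝓝 (f₁ c / f₀ c)) := by
  have key : ∀ f : ℝ → ℝ, Continuous f →
      Tendsto (fun x => (x - c)⁻¹ * ∫ t in c..x, f t) (𝓝[>] c) (𝓝 (f c)) := by
    intro f hf
    have h := (hf.integral_hasStrictDerivAt c c).hasDerivAt.tendsto_slope
    have h' := h.mono_left (nhdsWithin_mono c (fun x (hx : c < x) => hx.ne'))
    refine h'.congr fun x => ?_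
    simp [slope_def_module]
  refine ((key f₁ hc₁).div (key f₀ hc₀) (hp₀ c).ne').congr' ?_
  filter_upwards [self_mem_nhdsWithin] with x hx
  exact mul_div_mul_left _ _ (inv_ne_zero (sub_pos.2 hx).ne')

theorem interval_ratio_strict_mono_implies_smlrp
    (f₀ f₁ : ℝ → ℝ)
    (hc₀ : Continuous f₀) (hc₁ : Continuous f₁)
    (hp₀ : ∀ x, 0 < f₀ x) (hp₁ : ∀ x, 0 < f₁ x)
    (hi₀ : Integrable f₀) (hi₁ : Integrable f₁)
    (hγ : ∀ c : ℝ,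
      StrictMonoOn (fun x => (∫ t in c..x, f₁ t) / (∫ t in c..x, f₀ t)) (Set.Ioi c)) :
    StrictMono (fun x => f₁ x / f₀ x) := by
  intro a b hab
  obtain ⟨m, ham, hmb⟩ := exists_between hab
  have hpos : ∀ {u v : ℝ}, u < v → 0 < ∫ t in u..v, f₀ t := fun huv =>
    intervalIntegral.intervalIntegral_pos_of_pos (hc₀.intervalIntegrable _ _) hp₀ huv
  have left : f₁ a / f₀ a ≤ (∫ t in a..m, f₁ t) / (∫ t in a..m, f₀ t) := by
    refine le_of_tendsto (tendsto_interval_ratio hc₀ hc₁ hp₀ a) ?_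
    filter_upwards [Ioo_mem_nhdsGT ham] with x hx
    exact (hγ a hx.1 ham hx.2).le
  have right : (∫ t in a..b, f₁ t) / (∫ t in a..b, f₀ t) ≤ f₁ b / f₀ b := by
    refine ge_of_tendsto (tendsto_interval_ratio hc₀ hc₁ hp₀ b) ?_
    filter_upwards [self_mem_nhdsWithin] with x (hx : b < x)
    have h := hγ a hab (hab.trans hx) hx
    simp only at h
    rw [div_lt_div_iff₀ (hpos hab) (hpos (hab.trans hx)),
      ← intervalIntegral.integral_add_adjacent_intervals
        (hc₀.intervalIntegrable a b) (hc₀.intervalIntegrable b x),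
      ← intervalIntegral.integral_add_adjacent_intervals
        (hc₁.intervalIntegrable a b) (hc₁.intervalIntegrable b x)] at h
    rw [div_le_div_iff₀ (hpos hab) (hpos hx)]
    linarith
  exact left.trans_lt ((hγ a ham hab hmb).trans_le right)
end

section
/- Let f₀, f₁ : ℝ → ℝ be continuous, strictly positive, Lebesgue-integrable functions such that x ↦ f₁(x)/f₀(x) is strictly increasing on ℝ. Then the ratio of cumulative distribution functions x ↦ (∫_{(-∞,x)} f₁(t) dt)/(∫_{(-∞,x)} f₀(t) dt) is strictly increasing on ℝ. -/
/-!
For `x < y` put `c = f₁ x / f₀ x`. Monotonicity of the likelihood ratio gives `f₁ < c * f₀` on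
`(-∞, x)` and `c * f₀ ≤ f₁` on `[x, y)`. Integrating, the ratio of the masses of `f₁` and `f₀` is
less than `c` on `(-∞, x)` and at least `c` on `[x, y)`. The ratio on `(-∞, y)` is a mediant of
these two, hence strictly larger than the first.
-/

open MeasureTheory

theorem setIntegral_pos_of_pos_on {g : ℝ → ℝ} {s : Set ℝ} (hs : MeasurableSet s)
    (hvol : 0 < volume s) (hg : IntegrableOn g s) (hpos : ∀ t ∈ s, 0 < g t) :
    0 < ∫ t in s, g t := by
  rw [setIntegral_pos_iff_support_of_nonneg_ae
    (ae_restrict_of_forall_mem hs fun t ht => (hpos t ht).le) hg]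
  have h : Function.support g ∩ s = s :=
    Set.inter_eq_right.2 fun t ht => (hpos t ht).ne'
  rwa [h]

theorem cdf_ratio_strict_mono
    (f₀ f₁ : ℝ → ℝ)
    (hc₀ : Continuous f₀) (hc₁ : Continuous f₁)
    (hp₀ : ∀ x, 0 < f₀ x) (hp₁ : ∀ x, 0 < f₁ x)
    (hi₀ : Integrable f₀) (hi₁ : Integrable f₁)
    (hSMLRP : StrictMono (fun x => f₁ x / f₀ x)) :
    StrictMono (fun x => (∫ t in Set.Iio x, f₁ t) / (∫ t in Set.Iio x, f₀ t)) := by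
  intro x y hxy
  have hsplit : ∀ f : ℝ → ℝ, Integrable f →
      ∫ t in Set.Iio y, f t = (∫ t in Set.Iio x, f t) + ∫ t in Set.Ico x y, f t := by
    intro f hf
    rw [← Set.Iio_union_Ico_eq_Iio hxy.le]
    exact setIntegral_union (Set.disjoint_left.2 fun t ht ht' => not_lt.2 ht'.1 ht)
      measurableSet_Ico hf.integrableOn hf.integrableOn
  have hF₀ : 0 < ∫ t in Set.Iio x, f₀ t :=
    setIntegral_pos_of_pos_on measurableSet_Iio (by simp) hi₀.integrableOn fun t _ => hp₀ t
  have hD₀ : 0 < ∫ t in Set.Ico x y, f₀ t :=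
    setIntegral_pos_of_pos_on measurableSet_Ico (by simp [hxy]) hi₀.integrableOn fun t _ => hp₀ t
  set c := f₁ x / f₀ x with hc
  have hF : ∫ t in Set.Iio x, f₁ t < c * ∫ t in Set.Iio x, f₀ t := by
    have h : 0 < ∫ t in Set.Iio x, (c * f₀ t - f₁ t) :=
      setIntegral_pos_of_pos_on measurableSet_Iio (by simp)
        ((hi₀.const_mul c).sub hi₁).integrableOn
        fun t ht => sub_pos.2 ((div_lt_iff₀ (hp₀ t)).1 (hSMLRP ht))
    rw [integral_sub (hi₀.const_mul c).integrableOn hi₁.integrableOn, integral_const_mul] at h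
    linarith
  have hD : c * ∫ t in Set.Ico x y, f₀ t ≤ ∫ t in Set.Ico x y, f₁ t := by
    rw [← integral_const_mul]
    exact setIntegral_mono_on (hi₀.const_mul c).integrableOn hi₁.integrableOn measurableSet_Ico
      fun t ht => (le_div_iff₀ (hp₀ t)).1 (hSMLRP.monotone ht.1)
  simp only [hsplit f₀ hi₀, hsplit f₁ hi₁]
  rw [div_lt_div_iff₀ hF₀ (add_pos hF₀ hD₀)]
  have h₁ := mul_lt_mul_of_pos_right hF hD₀
  have h₂ := mul_le_mul_of_nonneg_right hD hF₀.le
  linarith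
end

section
/- Let (Ω, 𝓕, μ) be a probability space, A a measurable event with 0 < μ(A) < 1, and Z : Ω → ℝ a random variable such that the conditional distribution of Z given A has Lebesgue density f₁ and the conditional distribution of Z given the complement of A has Lebesgue density f₀, where f₀ and f₁ are continuous, strictly positive, and x ↦ f₁(x)/f₀(x) is strictly increasing. Then for every c ∈ ℝ the map t ↦ μ(A | Z ∈ (c, t]) is strictly increasing on (c, ∞), i.e. for c < t₁ < t₂ one has μ(A | Z ∈ (c, t₁]) < μ(A | Z ∈ (c, t₂]). -/
/-!
By Bayes' rule, with `a = μ A`, `b = μ Aᶜ`, `Iᵢ = ∫ fᵢ` over `(c, t₁]` and `Jᵢ = ∫ fᵢ` over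
`(t₁, t₂]`, the claim reads
`a I₁ / (a I₁ + b I₀) < a (I₁ + J₁) / (a (I₁ + J₁) + b (I₀ + J₀))`,
which after clearing denominators is `I₁ J₀ < J₁ I₀`. Put `k = f₁ t₁ / f₀ t₁`. As the likelihood
ratio is strictly increasing, `f₁ < k f₀` to the left of `t₁` and `k f₀ < f₁` to the right of it.
Integrating gives `I₁ < k I₀` and `k J₀ < J₁`, hence `I₁ J₀ < k I₀ J₀ < J₁ I₀`.
-/

open MeasureTheory

/-- The average likelihood ratio over `(c, t₁]` is strictly below that over `(t₁, t₂]`, because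
the value of the ratio at `t₁` separates them. -/
lemma integral_mul_integral_lt_of_ratio_strictMono {f₀ f₁ : ℝ → ℝ}
    (hc₀ : Continuous f₀) (hc₁ : Continuous f₁) (hp₀ : ∀ x, 0 < f₀ x)
    (hmono : StrictMono (fun x => f₁ x / f₀ x)) {c t₁ t₂ : ℝ} (h₁ : c < t₁) (h₂ : t₁ < t₂) :
    (∫ x in c..t₁, f₁ x) * (∫ x in t₁..t₂, f₀ x) <
      (∫ x in t₁..t₂, f₁ x) * (∫ x in c..t₁, f₀ x) := by
  set k := f₁ t₁ / f₀ t₁ with hk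
  have hleft : ∀ x, x < t₁ → f₁ x < k * f₀ x := fun x hx =>
    (div_lt_iff₀ (hp₀ x)).1 (hmono hx)
  have hright : ∀ x, t₁ < x → k * f₀ x < f₁ x := fun x hx =>
    (lt_div_iff₀ (hp₀ x)).1 (hmono hx)
  have heq : f₁ t₁ = k * f₀ t₁ := (div_mul_cancel₀ _ (hp₀ t₁).ne').symm
  have hI : (∫ x in c..t₁, f₁ x) < k * ∫ x in c..t₁, f₀ x := by
    rw [← intervalIntegral.integral_const_mul]
    refine intervalIntegral.integral_lt_integral_of_continuousOn_of_le_of_exists_lt h₁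
      hc₁.continuousOn (by fun_prop) (fun x hx => ?_)
      ⟨c, Set.left_mem_Icc.2 h₁.le, hleft c h₁⟩
    rcases hx.2.lt_or_eq with h | rfl
    · exact (hleft x h).le
    · exact heq.le
  have hJ : (k * ∫ x in t₁..t₂, f₀ x) < ∫ x in t₁..t₂, f₁ x := by
    rw [← intervalIntegral.integral_const_mul]
    exact intervalIntegral.integral_lt_integral_of_continuousOn_of_le_of_exists_lt h₂
      (by fun_prop) hc₁.continuousOn (fun x hx => (hright x hx.1).le)
      ⟨t₂, Set.right_mem_Icc.2 h₂.le, hright t₂ h₂⟩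
  have hI₀ : 0 < ∫ x in c..t₁, f₀ x :=
    intervalIntegral.intervalIntegral_pos_of_pos (hc₀.intervalIntegrable _ _) hp₀ h₁
  have hJ₀ : 0 < ∫ x in t₁..t₂, f₀ x :=
    intervalIntegral.intervalIntegral_pos_of_pos (hc₀.intervalIntegrable _ _) hp₀ h₂
  calc (∫ x in c..t₁, f₁ x) * (∫ x in t₁..t₂, f₀ x)
      < (k * ∫ x in c..t₁, f₀ x) * ∫ x in t₁..t₂, f₀ x := mul_lt_mul_of_pos_right hI hJ₀
    _ = (k * ∫ x in t₁..t₂, f₀ x) * ∫ x in c..t₁, f₀ x := by ring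
    _ < _ := mul_lt_mul_of_pos_right hJ hI₀

theorem conditional_prob_on_intervals_strict_mono
    {Ω : Type*} [MeasurableSpace Ω] (μ : Measure Ω) [IsProbabilityMeasure μ]
    (A : Set Ω) (hA : MeasurableSet A) (hA₀ : 0 < μ A) (hA₁ : μ A < 1)
    (Z : Ω → ℝ) (hZ : Measurable Z)
    (f₀ f₁ : ℝ → ℝ)
    (hc₀ : Continuous f₀) (hc₁ : Continuous f₁)
    (hp₀ : ∀ x, 0 < f₀ x) (hp₁ : ∀ x, 0 < f₁ x)
    (hd₁ : ∀ s : Set ℝ, MeasurableSet s →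
      μ (A ∩ Z ⁻¹' s) = μ A * ENNReal.ofReal (∫ x in s, f₁ x))
    (hd₀ : ∀ s : Set ℝ, MeasurableSet s →
      μ (Aᶜ ∩ Z ⁻¹' s) = μ Aᶜ * ENNReal.ofReal (∫ x in s, f₀ x))
    (hSMLRP : StrictMono (fun x => f₁ x / f₀ x)) :
    ∀ c t₁ t₂ : ℝ, c < t₁ → t₁ < t₂ →
      (μ (A ∩ Z ⁻¹' (Set.Ioc c t₁))).toReal / (μ (Z ⁻¹' (Set.Ioc c t₁))).toReal <
      (μ (A ∩ Z ⁻¹' (Set.Ioc c t₂))).toReal / (μ (Z ⁻¹' (Set.Ioc c t₂))).toReal := by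
  intro c t₁ t₂ h₁ h₂
  have ha : 0 < (μ A).toReal := ENNReal.toReal_pos hA₀.ne' (measure_ne_top _ _)
  have hb : 0 < (μ Aᶜ).toReal := by
    refine ENNReal.toReal_pos ?_ (measure_ne_top _ _)
    rw [prob_compl_eq_one_sub hA]
    exact (tsub_pos_of_lt hA₁).ne'
  have num : ∀ (B : Set Ω) (f : ℝ → ℝ), (∀ x, 0 < f x) →
      (∀ s : Set ℝ, MeasurableSet s →
        μ (B ∩ Z ⁻¹' s) = μ B * ENNReal.ofReal (∫ x in s, f x)) →
      ∀ t, c < t → (μ (B ∩ Z ⁻¹' (Set.Ioc c t))).toReal = (μ B).toReal * ∫ x in c..t, f x := by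
    intro B f hf hd t ht
    rw [hd _ measurableSet_Ioc, ENNReal.toReal_mul,
      ENNReal.toReal_ofReal (integral_nonneg fun x => (hf x).le),
      intervalIntegral.integral_of_le ht.le]
  have den : ∀ t, c < t → (μ (Z ⁻¹' (Set.Ioc c t))).toReal =
      (μ A).toReal * (∫ x in c..t, f₁ x) + (μ Aᶜ).toReal * ∫ x in c..t, f₀ x := by
    intro t ht
    rw [← num A f₁ hp₁ hd₁ t ht, ← num Aᶜ f₀ hp₀ hd₀ t ht,
      ← ENNReal.toReal_add (measure_ne_top _ _) (measure_ne_top _ _),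
      ← measure_inter_add_sdiff (Z ⁻¹' (Set.Ioc c t)) hA, Set.inter_comm, Set.sdiff_eq,
      Set.inter_comm _ Aᶜ]
  have pos : ∀ (f : ℝ → ℝ), Continuous f → (∀ x, 0 < f x) → ∀ u v, u < v →
      0 < ∫ x in u..v, f x := fun f hf hp u v huv =>
    intervalIntegral.intervalIntegral_pos_of_pos (hf.intervalIntegrable _ _) hp huv
  have split : ∀ (f : ℝ → ℝ), Continuous f →
      ∫ x in c..t₂, f x = (∫ x in c..t₁, f x) + ∫ x in t₁..t₂, f x := fun f hf =>
    (intervalIntegral.integral_add_adjacent_intervals (hf.intervalIntegrable _ _)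
      (hf.intervalIntegrable _ _)).symm
  have key := integral_mul_integral_lt_of_ratio_strictMono hc₀ hc₁ hp₀ hSMLRP h₁ h₂
  have hI₀ := pos f₀ hc₀ hp₀ c t₁ h₁
  have hI₁ := pos f₁ hc₁ hp₁ c t₁ h₁
  have hJ₀ := pos f₀ hc₀ hp₀ t₁ t₂ h₂
  have hJ₁ := pos f₁ hc₁ hp₁ t₁ t₂ h₂
  rw [num A f₁ hp₁ hd₁ t₁ h₁, num A f₁ hp₁ hd₁ t₂ (h₁.trans h₂), den t₁ h₁,
    den t₂ (h₁.trans h₂), split f₀ hc₀, split f₁ hc₁, div_lt_div_iff₀ (by positivity)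
    (by positivity)]
  -- The two cross products differ by `a * b * (J₁ I₀ - I₁ J₀)`.
  linear_combination ((μ A).toReal * (μ Aᶜ).toReal) * key
end

section
/- Let f₀, f₁ : ℝ → ℝ be continuous, strictly positive, Lebesgue-integrable functions such that x ↦ f₁(x)/f₀(x) is strictly increasing on ℝ, and let p ∈ (0,1). Then for every c ∈ ℝ and every t > c the interval risk satisfies the strict lower bound R(c,t) > p·f₁(c)/(p·f₁(c) + (1−p)·f₀(c)). Consequently, if a target risk level r satisfies r ≤ p·f₁(c)/(p·f₁(c) + (1−p)·f₀(c)), then R(c,t) > r for every t > c, so no choice of right endpoint t can achieve R(c,t) = r. -/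
/-!
For `s > c` the monotone likelihood ratio gives `f₁ c / f₀ c < f₁ s / f₀ s`, that is
`f₁ c * f₀ s < f₁ s * f₀ c`. Integrating over `[c, t]` gives
`f₁ c * ∫ f₀ < f₀ c * ∫ f₁` (`mul_integral_lt_mul_integral`): the odds of the averaged densities
exceed the odds at `c`. The map from odds to risk is strictly increasing, so clearing the positive
denominators gives the bound on the risk, and the claim about `r` follows by transitivity.
-/

open MeasureTheory

theorem mul_integral_lt_mul_integral {f₀ f₁ : ℝ → ℝ}
    (hc₀ : Continuous f₀) (hc₁ : Continuous f₁) (hp₀ : ∀ x, 0 < f₀ x)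
    (hmono : StrictMono (fun x => f₁ x / f₀ x)) {c t : ℝ} (hct : c < t) :
    f₁ c * (∫ s in c..t, f₀ s) < f₀ c * (∫ s in c..t, f₁ s) := by
  have hlt : ∀ s, c < s → f₁ c * f₀ s < f₀ c * f₁ s := fun s hs => by
    have h : f₁ c / f₀ c < f₁ s / f₀ s := hmono hs
    rw [div_lt_div_iff₀ (hp₀ c) (hp₀ s)] at h
    linarith
  rw [← intervalIntegral.integral_const_mul, ← intervalIntegral.integral_const_mul]
  exact intervalIntegral.integral_lt_integral_of_continuousOn_of_le_of_exists_lt hct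
    (by fun_prop) (by fun_prop) (fun s hs => (hlt s hs.1).le)
    ⟨t, Set.right_mem_Icc.mpr hct.le, hlt t hct⟩

theorem interval_risk_strict_lower_bound
    (f₀ f₁ : ℝ → ℝ)
    (hc₀ : Continuous f₀) (hc₁ : Continuous f₁)
    (hp₀ : ∀ x, 0 < f₀ x) (hp₁ : ∀ x, 0 < f₁ x)
    (hi₀ : Integrable f₀) (hi₁ : Integrable f₁)
    (hSMLRP : StrictMono (fun x => f₁ x / f₀ x))
    (p : ℝ) (hp : p ∈ Set.Ioo (0 : ℝ) 1) :
    (∀ c t : ℝ, c < t →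
      p * f₁ c / (p * f₁ c + (1 - p) * f₀ c) <
        p * (∫ s in c..t, f₁ s) /
          (p * (∫ s in c..t, f₁ s) + (1 - p) * (∫ s in c..t, f₀ s))) ∧
    (∀ c r : ℝ, r ≤ p * f₁ c / (p * f₁ c + (1 - p) * f₀ c) →
      ∀ t : ℝ, c < t →
        r < p * (∫ s in c..t, f₁ s) /
              (p * (∫ s in c..t, f₁ s) + (1 - p) * (∫ s in c..t, f₀ s))) := by
  have hp0 : 0 < p := hp.1
  have hq0 : 0 < 1 - p := sub_pos.mpr hp.2
  have key : ∀ c t : ℝ, c < t →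
      p * f₁ c / (p * f₁ c + (1 - p) * f₀ c) <
        p * (∫ s in c..t, f₁ s) /
          (p * (∫ s in c..t, f₁ s) + (1 - p) * (∫ s in c..t, f₀ s)) := by
    intro c t hct
    have hI₁ : 0 < ∫ s in c..t, f₁ s :=
      intervalIntegral.intervalIntegral_pos_of_pos (hc₁.intervalIntegrable c t) hp₁ hct
    have hI₀ : 0 < ∫ s in c..t, f₀ s :=
      intervalIntegral.intervalIntegral_pos_of_pos (hc₀.intervalIntegrable c t) hp₀ hct
    have hcross := mul_integral_lt_mul_integral hc₀ hc₁ hp₀ hSMLRP hct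
    have h₁ := hp₁ c
    have h₀ := hp₀ c
    rw [div_lt_div_iff₀ (by positivity) (by positivity)]
    -- The terms `p² * f₁ c * ∫ f₁` cancel, leaving `p * (1 - p)` times `hcross`.
    linear_combination (p * (1 - p)) * hcross
  exact ⟨key, fun c r hr t hct => hr.trans_lt (key c t hct)⟩
end

section
/- Let μ > 0 and σ > 0, and let φ_{m,σ}(x) = (1/(σ√(2π)))·exp(−(x−m)²/(2σ²)). Then the left-tail likelihood ratio tends to zero: the function t ↦ (∫_{(-∞,−t)} φ_{μ,σ}(x) dx)/(∫_{(-∞,−t)} φ_{−μ,σ}(x) dx) converges to 0 as t → ∞. -/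
/-!
The pointwise likelihood ratio is `φ_{μ,σ}(x) / φ_{-μ,σ}(x) = exp (2μx / σ²)`, which is increasing
in `x` because `μ > 0`. On `(-∞, -t)` it is therefore at most `exp (-2μt / σ²)`; integrating, the
ratio of the two tails obeys the same bound, which tends to `0` as `t → ∞`.
-/

open MeasureTheory Filter

/-- The Gaussian density with mean `m` and standard deviation `σ`. -/
noncomputable def gaussDensity (m σ x : ℝ) : ℝ :=
  (1 / (σ * Real.sqrt (2 * Real.pi))) * Real.exp (-(x - m) ^ 2 / (2 * σ ^ 2))

lemma gaussDensity_nonneg (m x : ℝ) {σ : ℝ} (hσ : 0 < σ) : 0 ≤ gaussDensity m σ x := by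
  unfold gaussDensity
  positivity

lemma integrable_gaussDensity (m : ℝ) {σ : ℝ} (hσ : 0 < σ) :
    Integrable (fun x => gaussDensity m σ x) := by
  have h := ((integrable_exp_neg_mul_sq (b := 1 / (2 * σ ^ 2)) (by positivity)).comp_sub_right
    m).const_mul (1 / (σ * Real.sqrt (2 * Real.pi)))
  refine h.congr (Eventually.of_forall fun x => ?_)
  simp only [gaussDensity]
  congr 2
  ring

/-- The likelihood ratio of `N(μ, σ²)` against `N(-μ, σ²)` at `x` is `exp (2μx / σ²)`. -/
lemma gaussDensity_eq_exp_mul (μ x : ℝ) {σ : ℝ} (hσ : 0 < σ) :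
    gaussDensity μ σ x = Real.exp (2 * μ * x / σ ^ 2) * gaussDensity (-μ) σ x := by
  unfold gaussDensity
  rw [mul_left_comm, ← Real.exp_add]
  congr 2
  field_simp
  ring

/-- Integrated form of the likelihood ratio bound on the left tail. -/
lemma setIntegral_gaussDensity_le (t : ℝ) {μ σ : ℝ} (hμ : 0 < μ) (hσ : 0 < σ) :
    ∫ x in Set.Iio (-t), gaussDensity μ σ x ≤
      Real.exp (-(2 * μ / σ ^ 2 * t)) * ∫ x in Set.Iio (-t), gaussDensity (-μ) σ x := by
  rw [← integral_const_mul]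
  refine setIntegral_mono_on (integrable_gaussDensity μ hσ).integrableOn
    ((integrable_gaussDensity (-μ) hσ).const_mul _).integrableOn measurableSet_Iio fun x hx => ?_
  rw [gaussDensity_eq_exp_mul μ x hσ]
  refine mul_le_mul_of_nonneg_right (Real.exp_le_exp.2 ?_) (gaussDensity_nonneg _ _ hσ)
  have h : 2 * μ / σ ^ 2 * x ≤ 2 * μ / σ ^ 2 * (-t) :=
    mul_le_mul_of_nonneg_left (le_of_lt hx) (by positivity)
  calc 2 * μ * x / σ ^ 2 = 2 * μ / σ ^ 2 * x := by ring
    _ ≤ 2 * μ / σ ^ 2 * (-t) := h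
    _ = -(2 * μ / σ ^ 2 * t) := by ring

theorem gaussian_left_tail_likelihood_ratio_tendsto_zero
    (μ σ : ℝ) (hμ : 0 < μ) (hσ : 0 < σ) :
    Tendsto
      (fun t : ℝ =>
        (∫ x in Set.Iio (-t), gaussDensity μ σ x) /
          (∫ x in Set.Iio (-t), gaussDensity (-μ) σ x))
      atTop (nhds 0) := by
  have hlim : Tendsto (fun t : ℝ => Real.exp (-(2 * μ / σ ^ 2 * t))) atTop (nhds 0) :=
    Real.tendsto_exp_neg_atTop_nhds_zero.comp (tendsto_id.const_mul_atTop (by positivity))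
  have hnn (m t : ℝ) : 0 ≤ ∫ x in Set.Iio (-t), gaussDensity m σ x :=
    integral_nonneg fun x => gaussDensity_nonneg m x hσ
  exact squeeze_zero (fun t => div_nonneg (hnn _ t) (hnn _ t))
    (fun t => div_le_of_le_mul₀ (hnn _ t) (Real.exp_nonneg _)
      (setIntegral_gaussDensity_le t hμ hσ)) hlim
end

section
/- Let Φ denote the standard normal cumulative distribution function and φ the standard normal density. For all real numbers t, μ with 0 < μ < t, the following strict lower bound holds: Φ(μ − t)/Φ(−μ − t) > e^{2μt} · (t+μ)·(t−μ)/((t−μ)² + 1). -/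
open MeasureTheory

/-- The standard normal density. -/
noncomputable def stdNormalPDF (s : ℝ) : ℝ :=
  (1 / Real.sqrt (2 * Real.pi)) * Real.exp (-s ^ 2 / 2)

/-- The standard normal cumulative distribution function. -/
noncomputable def stdNormalCDF (x : ℝ) : ℝ :=
  ∫ s in Set.Iio x, stdNormalPDF s

/-!
The bound is the quotient of the two Mills-ratio inequalities
`φ x / (x + 1 / x) < Φ (-x)` at `x = t - μ` and `Φ (-x) < φ x / x` at `x = t + μ`, combined with
`φ (t - μ) = exp (2 * μ * t) * φ (t + μ)`.

Both Mills inequalities come from an explicit function `φ * v` vanishing at `-∞`, whose derivative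
is `φ * w` with `w = v' - s * v`: integrating over `(-∞, a]` gives `∫ φ * w = φ a * v a`, which is
then compared with `Φ a = ∫ φ`. For `v s = -1 / s` one has `w = 1 + 1 / s ^ 2 > 1`, and for
`v s = -s / (s ^ 2 + 1)` one has `w = 1 - 2 / (s ^ 2 + 1) ^ 2 < 1`.
-/

open Filter Topology

lemma stdNormalPDF_pos (s : ℝ) : 0 < stdNormalPDF s := by
  unfold stdNormalPDF; positivity

lemma integrable_stdNormalPDF : Integrable stdNormalPDF := by
  have h := (integrable_exp_neg_mul_sq (b := 1 / 2) (by norm_num)).const_mul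
    (1 / Real.sqrt (2 * Real.pi))
  refine h.congr (Eventually.of_forall fun s => ?_)
  simp only [stdNormalPDF]
  ring_nf

lemma hasDerivAt_stdNormalPDF (s : ℝ) : HasDerivAt stdNormalPDF (stdNormalPDF s * (-s)) s := by
  have h : HasDerivAt (fun s : ℝ => -s ^ 2 / 2) (-s) s := by
    refine ((hasDerivAt_pow 2 s).neg.div_const 2).congr_deriv ?_
    norm_num
    ring
  refine (h.exp.const_mul (1 / Real.sqrt (2 * Real.pi))).congr_deriv ?_
  simp only [stdNormalPDF]
  ring

lemma continuous_stdNormalPDF : Continuous stdNormalPDF := by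
  unfold stdNormalPDF; fun_prop

lemma tendsto_stdNormalPDF_atBot : Tendsto stdNormalPDF atBot (𝓝 0) := by
  have h : Tendsto (fun s : ℝ => -s ^ 2 / 2) atBot atBot := by
    have h2 : Tendsto (fun s : ℝ => s * s) atBot atTop := tendsto_id.atBot_mul_atBot₀ tendsto_id
    refine (tendsto_neg_atTop_atBot.comp (h2.atTop_div_const (zero_lt_two))).congr fun s => ?_
    simp only [Function.comp]
    ring
  rw [← mul_zero (1 / Real.sqrt (2 * Real.pi))]
  exact (Real.tendsto_exp_atBot.comp h).const_mul (1 / Real.sqrt (2 * Real.pi))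

lemma stdNormalCDF_eq (a : ℝ) : stdNormalCDF a = ∫ s in Set.Iic a, stdNormalPDF s :=
  integral_Iic_eq_integral_Iio.symm

/-- A strict pointwise inequality on a half-line integrates to a strict inequality. -/
lemma setIntegral_Iic_lt {f g : ℝ → ℝ} {a : ℝ} (hf : IntegrableOn f (Set.Iic a))
    (hg : IntegrableOn g (Set.Iic a)) (h : ∀ s ≤ a, f s < g s) :
    ∫ s in Set.Iic a, f s < ∫ s in Set.Iic a, g s := by
  rw [← sub_pos, ← integral_sub hg hf]
  rw [setIntegral_pos_iff_support_of_nonneg_ae]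
  · have : (Function.support fun s => g s - f s) ∩ Set.Iic a = Set.Iic a :=
      Set.inter_eq_right.2 fun s hs => (sub_pos.2 (h s hs)).ne'
    rw [this, Real.volume_Iic]
    exact ENNReal.zero_lt_top
  · filter_upwards [ae_restrict_mem measurableSet_Iic] with s hs
    exact (sub_pos.2 (h s hs)).le
  · exact hg.sub hf

lemma stdNormalCDF_pos (a : ℝ) : 0 < stdNormalCDF a := by
  have h := setIntegral_Iic_lt (a := a) (f := fun _ => 0) integrableOn_zero
    integrable_stdNormalPDF.integrableOn fun s _ => stdNormalPDF_pos s
  rw [stdNormalCDF_eq]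
  simpa using h

/-- Integrability of `φ * w` for `w` bounded and continuous on `(-∞, a]`. -/
lemma integrableOn_stdNormalPDF_mul {w : ℝ → ℝ} {a C : ℝ} (hw : ContinuousOn w (Set.Iic a))
    (hC : ∀ s ≤ a, |w s| ≤ C) : IntegrableOn (fun s => stdNormalPDF s * w s) (Set.Iic a) := by
  refine Integrable.mono' (integrable_stdNormalPDF.integrableOn.mul_const C)
    ((continuous_stdNormalPDF.continuousOn.mul hw).aestronglyMeasurable measurableSet_Iic) ?_
  filter_upwards [ae_restrict_mem measurableSet_Iic] with s hs
  rw [Real.norm_eq_abs, abs_mul, abs_of_pos (stdNormalPDF_pos s)]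
  exact mul_le_mul_of_nonneg_left (hC s hs) (stdNormalPDF_pos s).le

/-- The fundamental theorem of calculus for `φ * v`, with `φ' = -s * φ` and `φ * v → 0` at `-∞`. -/
lemma integral_stdNormalPDF_mul {v w : ℝ → ℝ} {a : ℝ}
    (hv : ∀ s ≤ a, HasDerivAt v (w s + s * v s) s) (hv0 : Tendsto v atBot (𝓝 0))
    (hw : IntegrableOn (fun s => stdNormalPDF s * w s) (Set.Iic a)) :
    ∫ s in Set.Iic a, stdNormalPDF s * w s = stdNormalPDF a * v a := by
  have hlim : Tendsto (fun s => stdNormalPDF s * v s) atBot (𝓝 0) := by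
    simpa using tendsto_stdNormalPDF_atBot.mul hv0
  have h := integral_Iic_of_hasDerivAt_of_tendsto' (a := a) (f := fun s => stdNormalPDF s * v s)
    (f' := fun s => stdNormalPDF s * w s) (fun s hs => ?_) hw hlim
  · simpa using h
  · refine ((hasDerivAt_stdNormalPDF s).mul (hv s hs)).congr_deriv ?_
    ring

lemma stdNormalCDF_lt {a : ℝ} (ha : a < 0) : stdNormalCDF a < stdNormalPDF a * (-a⁻¹) := by
  have hint : IntegrableOn (fun s => stdNormalPDF s * (1 + (s ^ 2)⁻¹)) (Set.Iic a) := by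
    refine integrableOn_stdNormalPDF_mul (C := 1 + (a ^ 2)⁻¹) ?_ fun s hs => ?_
    · refine continuousOn_const.add ((continuousOn_id.pow 2).inv₀ fun s hs => ?_)
      exact pow_ne_zero 2 (lt_of_le_of_lt hs ha).ne
    · have h1 : 0 ≤ (s ^ 2)⁻¹ := by positivity
      rw [abs_of_nonneg (by linarith)]
      have h2 : 0 < a ^ 2 := sq_pos_of_neg ha
      have h3 : a ^ 2 ≤ s ^ 2 := by nlinarith
      gcongr
  have hv : ∀ s ≤ a, HasDerivAt (fun s : ℝ => -s⁻¹) (1 + (s ^ 2)⁻¹ + s * -s⁻¹) s := by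
    intro s hs
    have hs0 : s ≠ 0 := (lt_of_le_of_lt hs ha).ne
    refine (hasDerivAt_inv hs0).neg.congr_deriv ?_
    field_simp
    ring
  have hv0 : Tendsto (fun s : ℝ => -s⁻¹) atBot (𝓝 0) := by
    simpa using (tendsto_inv_atBot_zero (𝕜 := ℝ)).neg
  rw [← integral_stdNormalPDF_mul hv hv0 hint, stdNormalCDF_eq]
  refine setIntegral_Iic_lt integrable_stdNormalPDF.integrableOn hint fun s hs => ?_
  have hs0 : s ≠ 0 := (lt_of_le_of_lt hs ha).ne
  have : 0 < (s ^ 2)⁻¹ := by positivity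
  nlinarith [stdNormalPDF_pos s]

lemma lt_stdNormalCDF (a : ℝ) :
    stdNormalPDF a * (-a / (a ^ 2 + 1)) < stdNormalCDF a := by
  have hint : IntegrableOn (fun s => stdNormalPDF s * (1 - 2 / (s ^ 2 + 1) ^ 2)) (Set.Iic a) := by
    refine integrableOn_stdNormalPDF_mul (C := 1) ?_ fun s hs => ?_
    · refine Continuous.continuousOn ?_
      fun_prop (disch := intros; positivity)
    · have h1 : 0 ≤ 2 / (s ^ 2 + 1) ^ 2 := by positivity
      have h2 : 2 / (s ^ 2 + 1) ^ 2 ≤ 2 := div_le_self (by norm_num) (by nlinarith [sq_nonneg s])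
      rw [abs_le]
      constructor <;> linarith
  have hv : ∀ s ≤ a, HasDerivAt (fun s : ℝ => -s / (s ^ 2 + 1))
      (1 - 2 / (s ^ 2 + 1) ^ 2 + s * (-s / (s ^ 2 + 1))) s := by
    intro s _
    have hs0 : s ^ 2 + 1 ≠ 0 := by positivity
    refine ((hasDerivAt_id s).neg.div ((hasDerivAt_pow 2 s).add_const 1) hs0).congr_deriv ?_
    simp only [id, Pi.neg_apply]
    field_simp
    ring
  have hv0 : Tendsto (fun s : ℝ => -s / (s ^ 2 + 1)) atBot (𝓝 0) := by
    refine squeeze_zero_norm' ?_ (by simpa using (tendsto_inv_atBot_zero (𝕜 := ℝ)).neg :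
      Tendsto (fun s : ℝ => -s⁻¹) atBot (𝓝 0))
    filter_upwards [eventually_lt_atBot 0] with s hs
    have hs' : 0 < -s := by linarith
    rw [Real.norm_eq_abs, abs_of_pos (by positivity), ← inv_neg, div_le_iff₀ (by positivity),
      inv_mul_eq_div, le_div_iff₀ hs']
    nlinarith
  rw [← integral_stdNormalPDF_mul hv hv0 hint, stdNormalCDF_eq]
  refine setIntegral_Iic_lt hint integrable_stdNormalPDF.integrableOn fun s hs => ?_
  have : 0 < 2 / (s ^ 2 + 1) ^ 2 := by positivity
  nlinarith [stdNormalPDF_pos s]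

theorem normal_cdf_ratio_lower_bound
    (t μ : ℝ) (hμ : 0 < μ) (hμt : μ < t) :
    stdNormalCDF (μ - t) / stdNormalCDF (-μ - t) >
      Real.exp (2 * μ * t) * ((t + μ) * (t - μ) / ((t - μ) ^ 2 + 1)) := by
  have hp : 0 < t - μ := by linarith
  have hq : 0 < t + μ := by linarith
  have hlow := lt_stdNormalCDF (μ - t)
  have hup := stdNormalCDF_lt (a := -μ - t) (by linarith)
  have hφ : stdNormalPDF (μ - t) = Real.exp (2 * μ * t) * stdNormalPDF (-μ - t) := by
    simp only [stdNormalPDF]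
    rw [mul_left_comm, ← Real.exp_add]
    ring_nf
  rw [gt_iff_lt, lt_div_iff₀ (stdNormalCDF_pos _)]
  have hc : 0 < Real.exp (2 * μ * t) * ((t + μ) * (t - μ) / ((t - μ) ^ 2 + 1)) := by positivity
  refine (mul_lt_mul_of_pos_left hup hc).trans (lt_of_eq_of_lt ?_ hlow)
  rw [hφ, show -μ - t = -(t + μ) by ring, show μ - t = -(t - μ) by ring, inv_neg, neg_neg, neg_neg,
    neg_sq]
  field_simp
end

section
/- Let f₀, f₁ : ℝ → ℝ be continuous, strictly positive, Lebesgue-integrable functions such that x ↦ f₁(x)/f₀(x) is strictly increasing on ℝ, let p ∈ (0,1), let T ≥ 2, and let r = (r₁, …, r_T) be real numbers. For a strictly increasing vector of breakpoints τ = (τ₁ < … < τ_{T−1}), with the conventions τ₀ = −∞ and τ_T = +∞, define the group risks R_i(τ) = p·(∫_{τ_{i−1}}^{τ_i} f₁)/(p·(∫_{τ_{i−1}}^{τ_i} f₁) + (1−p)·(∫_{τ_{i−1}}^{τ_i} f₀)) for i = 1, …, T. If two strictly increasing breakpoint vectors τ and τ′ both satisfy R_i(τ) = r_i and R_i(τ′)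 = r_i for every i = 1, …, T, then τ = τ′. -/
/-!
Since `f₁ / f₀` is strictly increasing, enlarging a group to the right strictly increases its risk.
Put `k = f₁ b / f₀ b`. On a set `S ⊆ (-∞, b]` one has `f₁ ≤ k f₀`, while `f₁ > k f₀` on `(b, c]`, so
the ratio `∫ f₁ / ∫ f₀` over `S` is at most `k`, whereas over `(b, c]` it exceeds `k`; appending
`(b, c]` to `S` therefore changes the ratio, and with it the risk, which is an injective function of
the ratio (`setRisk_ne_union`). Hence the risk of a group with fixed left endpoint determines its
right endpoint (`setRisk_injOn`). The risk of `(-∞, τ₁]` thus determines `τ₁`, and, inductively,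
`τⱼ₋₁` and the risk of `(τⱼ₋₁, τⱼ]` determine `τⱼ`.
-/

open MeasureTheory

/-- The integral of `f` over the `i`-th group determined by the breakpoints `τ₁, …, τ_{T-1}`,
with the conventions `τ₀ = -∞` and `τ_T = +∞`:
the first group is `(-∞, τ₁]`, the last group is `(τ_{T-1}, ∞)`, and the
`i`-th group for `1 < i < T` is `(τ_{i-1}, τ_i]`. -/
noncomputable def groupIntegral (f : ℝ → ℝ) (T : ℕ) (τ : ℕ → ℝ) (i : ℕ) : ℝ :=
  if i = 1 then ∫ t in Set.Iic (τ 1), f t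
  else if i = T then ∫ t in Set.Ioi (τ (T - 1)), f t
  else ∫ t in (τ (i - 1))..(τ i), f t

/-- The risk of the `i`-th group: `P(Y = 1 ∣ Ψ(X) ∈ (τ_{i-1}, τ_i])` by Bayes's theorem. -/
noncomputable def groupRisk (f₀ f₁ : ℝ → ℝ) (p : ℝ) (T : ℕ) (τ : ℕ → ℝ) (i : ℕ) : ℝ :=
  p * groupIntegral f₁ T τ i /
    (p * groupIntegral f₁ T τ i + (1 - p) * groupIntegral f₀ T τ i)

/-- The conditional probability of class `1` given that the score lies in `S`. -/
noncomputable def setRisk (f₀ f₁ : ℝ → ℝ) (p : ℝ) (S : Set ℝ) : ℝ :=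
  p * (∫ t in S, f₁ t) / (p * (∫ t in S, f₁ t) + (1 - p) * ∫ t in S, f₀ t)

lemma setIntegral_pos_of_pos {f : ℝ → ℝ} (hp : ∀ x, 0 < f x) (hi : Integrable f) {S : Set ℝ}
    (hS : 0 < volume S) : 0 < ∫ t in S, f t := by
  rw [integral_pos_iff_support_of_nonneg (fun x => (hp x).le) hi.integrableOn]
  have : Function.support f = Set.univ := Set.eq_univ_of_forall fun x => (hp x).ne'
  simpa [this] using hS

/-- The value `k = f₁ b / f₀ b` separates the ratio `∫ f₁ / ∫ f₀` over `S` from the one over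
`(b, c]`. -/
lemma setRisk_ne_union {f₀ f₁ : ℝ → ℝ} (hp₀ : ∀ x, 0 < f₀ x) (hp₁ : ∀ x, 0 < f₁ x)
    (hi₀ : Integrable f₀) (hi₁ : Integrable f₁)
    (hmono : StrictMono (fun x => f₁ x / f₀ x)) {p : ℝ} (hp : p ∈ Set.Ioo (0 : ℝ) 1)
    {S : Set ℝ} {b c : ℝ} (hbc : b < c) (hSm : MeasurableSet S) (hSb : S ⊆ Set.Iic b)
    (hS : 0 < volume S) :
    setRisk f₀ f₁ p S ≠ setRisk f₀ f₁ p (S ∪ Set.Ioc b c) := by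
  obtain ⟨hp0, hp1⟩ := hp
  have hdisj : Disjoint S (Set.Ioc b c) :=
    Set.disjoint_left.2 fun x hx hx' => absurd (hSb hx) (not_le.2 hx'.1)
  have hY : 0 < volume (Set.Ioc b c) := by simpa using hbc
  have hX₀ := setIntegral_pos_of_pos hp₀ hi₀ hS
  have hX₁ := setIntegral_pos_of_pos hp₁ hi₁ hS
  have hY₀ := setIntegral_pos_of_pos hp₀ hi₀ hY
  have hY₁ := setIntegral_pos_of_pos hp₁ hi₁ hY
  set k := f₁ b / f₀ b with hk
  have hle : ∫ t in S, f₁ t ≤ k * ∫ t in S, f₀ t := by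
    rw [← integral_const_mul]
    refine setIntegral_mono_on hi₁.integrableOn (hi₀.const_mul k).integrableOn hSm fun x hx => ?_
    exact (div_le_iff₀ (hp₀ x)).1 (hmono.monotone (hSb hx))
  have hlt : k * ∫ t in Set.Ioc b c, f₀ t < ∫ t in Set.Ioc b c, f₁ t := by
    rw [← integral_const_mul, ← sub_pos, ← integral_sub hi₁.integrableOn
      (hi₀.const_mul k).integrableOn]
    have hpos : ∀ x ∈ Set.Ioc b c, 0 < f₁ x - k * f₀ x := fun x hx =>
      sub_pos.2 ((lt_div_iff₀ (hp₀ x)).1 (hmono hx.1))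
    rw [setIntegral_pos_iff_support_of_nonneg_ae
      ((ae_restrict_iff' measurableSet_Ioc).2 (.of_forall fun x hx => (hpos x hx).le))
      (hi₁.sub (hi₀.const_mul k)).integrableOn]
    have hsub : Set.Ioc b c ⊆ Function.support fun x => f₁ x - k * f₀ x :=
      fun x hx => (hpos x hx).ne'
    rwa [Set.inter_eq_right.2 hsub]
  intro h
  unfold setRisk at h
  rw [setIntegral_union hdisj measurableSet_Ioc hi₀.integrableOn hi₀.integrableOn,
    setIntegral_union hdisj measurableSet_Ioc hi₁.integrableOn hi₁.integrableOn] at h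
  generalize (∫ t in S, f₀ t) = X₀ at *
  generalize (∫ t in S, f₁ t) = X₁ at *
  generalize (∫ t in Set.Ioc b c, f₀ t) = Y₀ at *
  generalize (∫ t in Set.Ioc b c, f₁ t) = Y₁ at *
  have hq : 0 < 1 - p := sub_pos.2 hp1
  rw [div_eq_div_iff (by positivity) (by positivity)] at h
  -- Equal risks mean equal ratios: `X₁ / X₀ = Y₁ / Y₀`, against `X₁ / X₀ ≤ k < Y₁ / Y₀`.
  have hcross : p * (1 - p) * (X₁ * Y₀) = p * (1 - p) * (Y₁ * X₀) := by linear_combination h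
  have hcross := mul_left_cancel₀ (mul_pos hp0 hq).ne' hcross
  have h1 := mul_le_mul_of_nonneg_right hle hY₀.le
  have h2 := mul_lt_mul_of_pos_right hlt hX₀
  linarith [mul_right_comm k X₀ Y₀]

/-- For a family `G b` of sets with right endpoint `b` and a common left end (such as `Iic b` or
`Ioc a b`), the risk of `G b` determines `b`. -/
lemma setRisk_injOn {f₀ f₁ : ℝ → ℝ} (hp₀ : ∀ x, 0 < f₀ x) (hp₁ : ∀ x, 0 < f₁ x)
    (hi₀ : Integrable f₀) (hi₁ : Integrable f₁)
    (hmono : StrictMono (fun x => f₁ x / f₀ x)) {p : ℝ} (hp : p ∈ Set.Ioo (0 : ℝ) 1)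
    {G : ℝ → Set ℝ} {D : Set ℝ} (hGm : ∀ b, MeasurableSet (G b)) (hGb : ∀ b, G b ⊆ Set.Iic b)
    (hGv : ∀ b ∈ D, 0 < volume (G b))
    (hG : ∀ b ∈ D, ∀ c, b < c → G b ∪ Set.Ioc b c = G c) :
    Set.InjOn (fun b => setRisk f₀ f₁ p (G b)) D := by
  have key : ∀ b ∈ D, ∀ c, b < c → setRisk f₀ f₁ p (G b) ≠ setRisk f₀ f₁ p (G c) := by
    intro b hb c hbc
    rw [← hG b hb c hbc]
    exact setRisk_ne_union hp₀ hp₁ hi₀ hi₁ hmono hp hbc (hGm b) (hGb b) (hGv b hb)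
  intro b hb c hc h
  rcases lt_trichotomy b c with hlt | heq | hgt
  · exact absurd h (key b hb c hlt)
  · exact heq
  · exact absurd h.symm (key c hc b hgt)

lemma groupRisk_one (f₀ f₁ : ℝ → ℝ) (p : ℝ) (T : ℕ) (τ : ℕ → ℝ) :
    groupRisk f₀ f₁ p T τ 1 = setRisk f₀ f₁ p (Set.Iic (τ 1)) := by
  simp [groupRisk, groupIntegral, setRisk]

lemma groupRisk_succ (f₀ f₁ : ℝ → ℝ) (p : ℝ) {T : ℕ} {τ : ℕ → ℝ} {j : ℕ} (hj : 1 ≤ j)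
    (hjT : j + 1 ≠ T) (hτ : τ j < τ (j + 1)) :
    groupRisk f₀ f₁ p T τ (j + 1) = setRisk f₀ f₁ p (Set.Ioc (τ j) (τ (j + 1))) := by
  have hj0 : j ≠ 0 := by omega
  simp [groupRisk, groupIntegral, setRisk, hj0, hjT, intervalIntegral.integral_of_le hτ.le]

theorem breakpoints_unique_of_group_risks_eq
    (f₀ f₁ : ℝ → ℝ)
    (hc₀ : Continuous f₀) (hc₁ : Continuous f₁)
    (hp₀ : ∀ x, 0 < f₀ x) (hp₁ : ∀ x, 0 < f₁ x)
    (hi₀ : Integrable f₀) (hi₁ : Integrable f₁)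
    (hSMLRP : StrictMono (fun x => f₁ x / f₀ x))
    (p : ℝ) (hp : p ∈ Set.Ioo (0 : ℝ) 1)
    (T : ℕ) (hT : 2 ≤ T)
    (r : ℕ → ℝ)
    (τ τ' : ℕ → ℝ)
    (hτ : ∀ j, 1 ≤ j → j + 1 ≤ T - 1 → τ j < τ (j + 1))
    (hτ' : ∀ j, 1 ≤ j → j + 1 ≤ T - 1 → τ' j < τ' (j + 1))
    (hRτ : ∀ i, 1 ≤ i → i ≤ T → groupRisk f₀ f₁ p T τ i = r i)
    (hRτ' : ∀ i, 1 ≤ i → i ≤ T → groupRisk f₀ f₁ p T τ' i = r i) :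
    ∀ j, 1 ≤ j → j ≤ T - 1 → τ j = τ' j := by
  intro j hj
  induction j, hj using Nat.le_induction with
  | base =>
    intro _
    have h := (hRτ 1 le_rfl (by omega)).trans (hRτ' 1 le_rfl (by omega)).symm
    rw [groupRisk_one, groupRisk_one] at h
    exact setRisk_injOn hp₀ hp₁ hi₀ hi₁ hSMLRP hp (G := Set.Iic) (D := Set.univ)
      (fun _ => measurableSet_Iic) (fun _ => subset_rfl) (fun b _ => by simp)
      (fun b _ c hbc => Set.Iic_union_Ioc_eq_Iic hbc.le) trivial trivial h
  | succ j hj ih =>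
    intro hjT
    have hlt := hτ j hj hjT
    have hlt' := hτ' j hj hjT
    have h := (hRτ (j + 1) (by omega) (by omega)).trans (hRτ' (j + 1) (by omega) (by omega)).symm
    rw [groupRisk_succ f₀ f₁ p hj (by omega) hlt, groupRisk_succ f₀ f₁ p hj (by omega) hlt',
      ← ih (by omega)] at h
    rw [← ih (by omega)] at hlt'
    exact setRisk_injOn hp₀ hp₁ hi₀ hi₁ hSMLRP hp (G := Set.Ioc (τ j)) (D := Set.Ioi (τ j))
      (fun _ => measurableSet_Ioc) (fun _ _ hx => hx.2) (fun b hb => by simpa using hb)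
      (fun b hb c hbc => Set.Ioc_union_Ioc_eq_Ioc (le_of_lt hb) hbc.le) hlt hlt' h
end
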